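/- Assume V ∈ C¹(ℝ^N), c ∈ ℝ, condition (V^c) and the coercivity condition (1.7). If q ∈ ℳ_c and (τ, σ) ⊆ (α_q, ω_q) is any subinterval, then ½ ∫_τ^σ |q̇(t)|² dt = ∫_τ^σ (V(q(t)) − c) dt. -/

import Mathlib

open MeasureTheory Filter Metric Set Topology
open scoped ENNReal

noncomputable section

abbrev Euc (N : ℕ) := EuclideanSpace ℝ (Fin N)

def setDist {E : Type*} [PseudoMetricSpace E] (A B : Set E) : ℝ :=
  sInf ((fun p : E × E => dist p.1 p.2) '' (A ×ˢ B))

def IsH1loc {N : ℕ} (q q' : ℝ → Euc N) : Prop :=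
  LocallyIntegrable q' volume ∧
  (∀ a b : ℝ, IntegrableOn (fun t => ‖q' t‖ ^ 2) (Icc a b) volume) ∧
  (∀ a b : ℝ, q b - q a = ∫ t in a..b, q' t)

def lagJ {N : ℕ} (V : Euc N → ℝ) (c : ℝ) (q q' : ℝ → Euc N) (I : Set ℝ) : ℝ≥0∞ :=
  ∫⁻ t in I, ENNReal.ofReal (2⁻¹ * ‖q' t‖ ^ 2 + (V (q t) - c))

def Gamma {N : ℕ} (V : Euc N → ℝ) (c : ℝ) (Vm Vp : Set (Euc N)) :
    Set ((ℝ → Euc N) × (ℝ → Euc N)) :=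
  {p | IsH1loc p.1 p.2 ∧ (∀ t, c ≤ V (p.1 t)) ∧
    (∀ ε > 0, ∃ᶠ t in atBot, infDist (p.1 t) Vm < ε) ∧
    (∀ ε > 0, ∃ᶠ t in atTop, infDist (p.1 t) Vp < ε)}

def mc {N : ℕ} (V : Euc N → ℝ) (c : ℝ) (Vm Vp : Set (Euc N)) : ℝ≥0∞ :=
  ⨅ (p) (_ : p ∈ Gamma V c Vm Vp), lagJ V c p.1 p.2 univ

def Coercive {N : ℕ} (V : Euc N → ℝ) (c : ℝ) (Vm Vp : Set (Euc N)) (R : ℝ) : Prop :=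
  mc V c Vm Vp =
    ⨅ (p) (_ : p ∈ Gamma V c Vm Vp) (_ : ∀ t, ‖p.1 t‖ ≤ R), lagJ V c p.1 p.2 univ

/-- `ρ₀ := (1/4)·dist(𝒱⁻ ∩ B̄_R(0), 𝒱⁺ ∩ B̄_R(0))`. -/
def rho0 {N : ℕ} (Vm Vp : Set (Euc N)) (R : ℝ) : ℝ :=
  (1 / 4) * setDist (Vm ∩ closedBall 0 R) (Vp ∩ closedBall 0 R)

/-- membership in `ℳ_c`. -/
def MemM {N : ℕ} (V : Euc N → ℝ) (c : ℝ) (Vm Vp : Set (Euc N)) (R : ℝ)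
    (q q' : ℝ → Euc N) : Prop :=
  (q, q') ∈ Gamma V c Vm Vp ∧
  infDist (q 0) {x | V x ≤ c} = rho0 Vm Vp R ∧
  lagJ V c q q' univ = mc V c Vm Vp ∧
  (∀ t, ‖q t‖ ≤ R)

/-- `α_q` (valued in `[-∞,+∞]`, with `−∞` when `q(ℝ) ∩ 𝒱⁻ = ∅`). -/
def alphaQ {N : ℕ} (Vm : Set (Euc N)) (q : ℝ → Euc N) : EReal :=
  sSup {x : EReal | ∃ t : ℝ, x = (t : EReal) ∧ q t ∈ Vm}

/-- `ω_q` (valued in `[-∞,+∞]`, with `+∞` when there is no `t > α_q` with `q(t) ∈ 𝒱⁺`). -/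
def omegaQ {N : ℕ} (Vm Vp : Set (Euc N)) (q : ℝ → Euc N) : EReal :=
  sInf {x : EReal | ∃ t : ℝ, x = (t : EReal) ∧ alphaQ Vm q < (t : EReal) ∧ q t ∈ Vp}

/-- reflection of `q` with respect to `b` (used for `t > b`). -/
def reflPlus {N : ℕ} (q : ℝ → Euc N) (b : ℝ) : ℝ → Euc N :=
  fun t => if t ≤ b then q t else q (2 * b - t)

/-- reflection of `q` with respect to `a` (used for `t < a`). -/
def reflMinus {N : ℕ} (q : ℝ → Euc N) (a : ℝ) : ℝ → Euc N :=
  fun t => if a ≤ t then q t else q (2 * a - t)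

/-- ω-limit set `Ω_q := ⋂_{t > α_q} closure {q(s) : s ≥ t}`. -/
def omegaLimitSet {N : ℕ} (Vm : Set (Euc N)) (q : ℝ → Euc N) : Set (Euc N) :=
  ⋂ (t : ℝ) (_ : alphaQ Vm q < (t : EReal)), closure (q '' Ici t)

/-- α-limit set `𝒜_q := ⋂_{t < ω_q} closure {q(s) : s ≤ t}`. -/
def alphaLimitSet {N : ℕ} (Vm Vp : Set (Euc N)) (q : ℝ → Euc N) : Set (Euc N) :=
  ⋂ (t : ℝ) (_ : (t : EReal) < omegaQ Vm Vp q), closure (q '' Iic t)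

/-!
Running the past of a curve `q` up to a time `τ` at speed `l` gives another admissible curve, whose
kinetic action `K` on `(-∞, τ]` is multiplied by `l` and whose potential action `P` there by `l⁻¹`.
For a minimizer of finite action, `l = 1` therefore minimizes `l * K + l⁻¹ * P`, so that `K = P`.
Since this holds on every half-line `(-∞, τ]`, the energy identity `½|q̇|² = V(q) - c` holds almost
everywhere. The infimum of the action is finite because the two parts of the sublevel set are joined
by a segment whose interior avoids both, and `V ≥ c` along that segment.
-/

theorem setDist_le_dist {E : Type*} [PseudoMetricSpace E] {A B : Set E} {x y : E} (hx : x ∈ A)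
    (hy : y ∈ B) : setDist A B ≤ dist x y :=
  csInf_le ⟨0, forall_mem_image.2 fun _ _ => dist_nonneg⟩ (mem_image_of_mem _ (mk_mem_prod hx hy))

theorem nonempty_of_setDist_pos {E : Type*} [PseudoMetricSpace E] {A B : Set E}
    (h : 0 < setDist A B) : A.Nonempty ∧ B.Nonempty := by
  rw [← prod_nonempty_iff, nonempty_iff_ne_empty]
  intro hAB
  simp [setDist, hAB] at h

theorem disjoint_of_setDist_pos {E : Type*} [PseudoMetricSpace E] {A B : Set E}
    (h : 0 < setDist A B) : Disjoint A B :=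
  disjoint_left.2 fun x hA hB => h.not_ge (by simpa using setDist_le_dist hA hB)

theorem eq_of_forall_add_le_mul_add_inv_mul {a b : ℝ}
    (h : ∀ l : ℝ, 0 < l → a + b ≤ l * a + l⁻¹ * b) : a = b := by
  have hmin : IsLocalMin (fun l : ℝ => l * a + l⁻¹ * b) 1 := by
    filter_upwards [lt_mem_nhds one_pos] with l hl
    simpa using h l hl
  have hderiv : HasDerivAt (fun l : ℝ => l * a + l⁻¹ * b) (a - b) 1 := by
    simpa [sub_eq_add_neg] using
      ((hasDerivAt_id (1 : ℝ)).mul_const a).fun_add ((hasDerivAt_inv one_ne_zero).mul_const b)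
  exact sub_eq_zero.1 (hmin.hasDerivAt_eq_zero hderiv)

theorem exists_disjoint_openSegment {E : Type*} [NormedAddCommGroup E] [NormedSpace ℝ E]
    {A B : Set E} (hA : IsClosed A) (hB : IsClosed B) (hAne : A.Nonempty) (hBne : B.Nonempty)
    (hAB : Disjoint A B) :
    ∃ x ∈ A, ∃ y ∈ B, Disjoint (openSegment ℝ x y) (A ∪ B) := by
  -- Among the pairs of points of `A` and `B` on a segment joining the two sets, take a closest one.
  obtain ⟨x₀, hx₀⟩ := hAne
  obtain ⟨y₀, hy₀⟩ := hBne
  have hK : IsCompact (segment ℝ x₀ y₀) := by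
    rw [segment_eq_image_lineMap]
    exact isCompact_Icc.image AffineMap.lineMap_continuous
  obtain ⟨⟨x, y⟩, ⟨⟨hxK, hxA⟩, hyK, hyB⟩, hmin⟩ :=
    ((hK.inter_right hA).prod (hK.inter_right hB)).exists_isMinOn
      ⟨(x₀, y₀), ⟨left_mem_segment ℝ x₀ y₀, hx₀⟩, right_mem_segment ℝ x₀ y₀, hy₀⟩
      continuous_dist.continuousOn
  have hle {u v : E} (hu : u ∈ segment ℝ x₀ y₀ ∩ A) (hv : v ∈ segment ℝ x₀ y₀ ∩ B) :
      dist x y ≤ dist u v := hmin (mk_mem_prod hu hv)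
  have hxy : 0 < dist x y := dist_pos.2 (hAB.ne_of_mem hxA hyB)
  refine ⟨x, hxA, y, hyB, disjoint_left.2 fun z hz hzAB => ?_⟩
  have hzK := (convex_segment x₀ y₀).openSegment_subset hxK hyK hz
  rw [openSegment_eq_image_lineMap] at hz
  obtain ⟨t, ⟨ht0, ht1⟩, rfl⟩ := hz
  rcases hzAB with hzA | hzB
  · have := hle ⟨hzK, hzA⟩ ⟨hyK, hyB⟩
    rw [dist_lineMap_right, Real.norm_of_nonneg (by linarith)] at this
    nlinarith
  · have := hle ⟨hxK, hxA⟩ ⟨hzK, hzB⟩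
    rw [dist_left_lineMap, Real.norm_of_nonneg ht0.le] at this
    nlinarith

theorem le_of_mem_segment_of_disjoint_sublevel {E : Type*} [AddCommGroup E] [Module ℝ E]
    [TopologicalSpace E] [ContinuousAdd E] [ContinuousSMul ℝ E] {V : E → ℝ} (hV : Continuous V)
    {c : ℝ} {x y z : E} (h : Disjoint (openSegment ℝ x y) {w | V w ≤ c})
    (hz : z ∈ segment ℝ x y) : c ≤ V z := by
  have hsub : openSegment ℝ x y ⊆ {w | c ≤ V w} := fun w hw => by
    have hlt : ¬ V w ≤ c := disjoint_left.1 h hw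
    exact (not_le.1 hlt).le
  exact closure_minimal hsub (isClosed_le continuous_const hV)
    (segment_subset_closure_openSegment hz)

theorem ae_eq_of_setLIntegral_Iic_eq {α : Type*} [TopologicalSpace α] [SecondCountableTopology α]
    [LinearOrder α] [OrderTopology α] [MeasurableSpace α] [BorelSpace α] {μ : Measure α}
    {f g : α → ℝ≥0∞} (hf : AEMeasurable f μ) (hg : AEMeasurable g μ) (hfi : ∫⁻ x, f x ∂μ ≠ ∞)
    (h : ∀ a, ∫⁻ x in Iic a, f x ∂μ = ∫⁻ x in Iic a, g x ∂μ) : f =ᵐ[μ] g := by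
  have := isFiniteMeasure_withDensity hfi
  refine (withDensity_eq_iff hf hg hfi).1 (Measure.ext_of_Iic _ _ fun a => ?_)
  rw [withDensity_apply _ measurableSet_Iic, withDensity_apply _ measurableSet_Iic, h a]

section AffineSubstitution

variable {l : ℝ}

theorem map_volume_affineHomeomorph (hl : l ≠ 0) (d : ℝ) :
    Measure.map (affineHomeomorph l d hl) volume = ENNReal.ofReal |l⁻¹| • volume := by
  have hcomp : ⇑(affineHomeomorph l d hl) = (· + d) ∘ (l * ·) := rfl
  rw [hcomp, ← Measure.map_map (measurable_add_const d) (measurable_const_mul l),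
    Real.map_volume_mul_left hl, Measure.map_smul, map_add_right_eq_self]

theorem setLIntegral_comp_mul_add (hl : l ≠ 0) (d : ℝ) (f : ℝ → ℝ≥0∞) (s : Set ℝ) :
    ∫⁻ t in (fun t => l * t + d) ⁻¹' s, f (l * t + d) =
      ENNReal.ofReal |l⁻¹| * ∫⁻ t in s, f t := by
  have he := (affineHomeomorph l d hl).measurableEmbedding
  have h := he.lintegral_map (μ := volume.restrict ((fun t => l * t + d) ⁻¹' s)) f
  rw [show (fun t => l * t + d) = affineHomeomorph l d hl from rfl, ← he.restrict_map,
    map_volume_affineHomeomorph, Measure.restrict_smul, lintegral_smul_measure, smul_eq_mul] at h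
  exact h.symm

theorem locallyIntegrable_comp_mul_add {F : Type*} [NormedAddCommGroup F] {f : ℝ → F}
    (hf : LocallyIntegrable f volume) (hl : l ≠ 0) (d : ℝ) :
    LocallyIntegrable (fun t => f (l * t + d)) volume := by
  refine (locallyIntegrable_map_homeomorph (affineHomeomorph l d hl)).1 fun x => ?_
  obtain ⟨u, hu, hfu⟩ := hf x
  refine ⟨u, hu, ?_⟩
  rw [map_volume_affineHomeomorph, IntegrableOn, Measure.restrict_smul]
  exact hfu.smul_measure ENNReal.ofReal_ne_top

theorem lintegral_Iic_comp_dilation (hl : 0 < l) (τ : ℝ) (f : ℝ → ℝ≥0∞) :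
    ∫⁻ t in Iic τ, f (l * t + (1 - l) * τ) = ENNReal.ofReal l⁻¹ * ∫⁻ t in Iic τ, f t := by
  have hpre : (fun t => l * t + (1 - l) * τ) ⁻¹' Iic τ = Iic τ := by
    ext t
    rw [mem_preimage, mem_Iic, mem_Iic, ← mul_le_mul_iff_right₀ hl (b := t)]
    constructor <;> intro h <;> linarith
  have h := setLIntegral_comp_mul_add hl.ne' ((1 - l) * τ) f (Iic τ)
  rwa [hpre, abs_of_pos (inv_pos.2 hl)] at h

end AffineSubstitution

theorem locallyIntegrable_piecewise {X F : Type*} [TopologicalSpace X] [MeasurableSpace X]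
    {μ : Measure X} [NormedAddCommGroup F] {f g : X → F} {s : Set X} [DecidablePred (· ∈ s)]
    (hs : MeasurableSet s) (hf : LocallyIntegrable f μ) (hg : LocallyIntegrable g μ) :
    LocallyIntegrable (s.piecewise f g) μ := by
  rw [← indicator_add_compl_eq_piecewise]
  exact (hf.indicator hs).add (hg.indicator hs.compl)

theorem locallyIntegrable_iff_integrableOn_Icc {F : Type*} [NormedAddCommGroup F] {μ : Measure ℝ}
    {f : ℝ → F} : LocallyIntegrable f μ ↔ ∀ a b : ℝ, IntegrableOn f (Icc a b) μ :=
  ⟨fun hf _ _ => hf.integrableOn_isCompact isCompact_Icc,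
    fun hf x => ⟨Icc (x - 1) (x + 1), Icc_mem_nhds (by linarith) (by linarith), hf _ _⟩⟩

theorem isH1loc_iff {N : ℕ} {q q' : ℝ → Euc N} :
    IsH1loc q q' ↔ LocallyIntegrable q' volume ∧
      LocallyIntegrable (fun t => ‖q' t‖ ^ 2) volume ∧
      ∀ a b : ℝ, q b - q a = ∫ t in a..b, q' t := by
  rw [IsH1loc, locallyIntegrable_iff_integrableOn_Icc (f := fun t => ‖q' t‖ ^ 2)]

theorem isH1loc_of_contDiff {N : ℕ} {q : ℝ → Euc N} (hq : ContDiff ℝ 1 q) :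
    IsH1loc q (deriv q) := by
  have hcont : Continuous (deriv q) := hq.continuous_deriv_one
  exact isH1loc_iff.2 ⟨hcont.locallyIntegrable, (hcont.norm.pow 2).locallyIntegrable,
    fun a b => (intervalIntegral.integral_deriv_eq_sub
      (fun t _ => hq.differentiable_one t) (hcont.intervalIntegrable a b)).symm⟩

namespace IsH1loc

variable {N : ℕ} {q q' : ℝ → Euc N}

theorem intervalIntegrable (h : IsH1loc q q') (a b : ℝ) : IntervalIntegrable q' volume a b :=
  intervalIntegrable_iff.2
    ((h.1.integrableOn_isCompact isCompact_uIcc).mono_set uIoc_subset_uIcc)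

theorem eq_add_integral (h : IsH1loc q q') (a : ℝ) : q = fun t => q a + ∫ s in a..t, q' s := by
  funext t
  rw [← h.2.2 a t, add_sub_cancel]

theorem continuous (h : IsH1loc q q') : Continuous q := by
  rw [h.eq_add_integral 0]
  exact continuous_const.add (intervalIntegral.continuous_primitive h.intervalIntegrable 0)

theorem ae_deriv_eq (h : IsH1loc q q') : deriv q =ᵐ[volume] q' := by
  filter_upwards [LocallyIntegrable.ae_hasDerivAt_integral h.1] with t ht
  rw [h.eq_add_integral 0]
  exact ((ht 0).const_add (q 0)).deriv

theorem comp_mul_add (h : IsH1loc q q') {l : ℝ} (hl : l ≠ 0) (d : ℝ) :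
    IsH1loc (fun t => q (l * t + d)) (fun t => l • q' (l * t + d)) := by
  obtain ⟨hint, hsq, hftc⟩ := isH1loc_iff.1 h
  refine isH1loc_iff.2 ⟨(locallyIntegrable_comp_mul_add hint hl d).smul l, ?_, fun a b => ?_⟩
  · simp only [norm_smul, mul_pow]
    exact (locallyIntegrable_comp_mul_add hsq hl d).smul (‖l‖ ^ 2)
  · rw [intervalIntegral.integral_smul, intervalIntegral.smul_integral_comp_mul_add, hftc]

theorem piecewise {f f' g g' : ℝ → Euc N} {s : ℝ} (hf : IsH1loc f f') (hg : IsH1loc g g')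
    (hs : f s = g s) : IsH1loc ((Iic s).piecewise f g) ((Iic s).piecewise f' g') := by
  have hint := locallyIntegrable_piecewise (measurableSet_Iic (a := s)) hf.1 hg.1
  have hsq := locallyIntegrable_piecewise (measurableSet_Iic (a := s))
    (isH1loc_iff.1 hf).2.1 (isH1loc_iff.1 hg).2.1
  have hftc (b : ℝ) : (Iic s).piecewise f g b - f s =
      ∫ t in s..b, (Iic s).piecewise f' g' t := by
    rcases le_or_gt b s with hb | hb
    · rw [piecewise_eq_of_mem _ _ _ (mem_Iic.2 hb), hf.2.2 s b]
      refine intervalIntegral.integral_congr_ae (ae_of_all _ fun t ht => ?_)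
      rw [uIoc_of_ge hb] at ht
      exact (piecewise_eq_of_mem _ _ _ (mem_Iic.2 ht.2)).symm
    · rw [piecewise_eq_of_notMem _ _ _ (notMem_Iic.2 hb), hs, hg.2.2 s b]
      refine intervalIntegral.integral_congr_ae (ae_of_all _ fun t ht => ?_)
      rw [uIoc_of_le hb.le] at ht
      exact (piecewise_eq_of_notMem _ _ _ (notMem_Iic.2 ht.1)).symm
  have hii (b : ℝ) : IntervalIntegrable ((Iic s).piecewise f' g') volume s b :=
    intervalIntegrable_iff.2
      ((hint.integrableOn_isCompact isCompact_uIcc).mono_set uIoc_subset_uIcc)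
  refine isH1loc_iff.2 ⟨hint, ?_, fun a b => ?_⟩
  · have hnorm : (fun t => ‖(Iic s).piecewise f' g' t‖ ^ 2) =
        (Iic s).piecewise (fun t => ‖f' t‖ ^ 2) fun t => ‖g' t‖ ^ 2 :=
      funext fun _ => apply_piecewise (Iic s) f' g' fun _ x => ‖x‖ ^ 2
    rwa [hnorm]
  · rw [← intervalIntegral.integral_interval_sub_left (hii b) (hii a), ← hftc, ← hftc,
      sub_sub_sub_cancel_right]

end IsH1loc

/-- The kinetic part `½ ∫_I |q̇|²` of the action. -/
def kinetic {N : ℕ} (q' : ℝ → Euc N) (I : Set ℝ) : ℝ≥0∞ :=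
  ∫⁻ t in I, ENNReal.ofReal (2⁻¹ * ‖q' t‖ ^ 2)

/-- The potential part `∫_I (V(q) - c)` of the action; the integrand is truncated at `0`, which is
harmless on the curves of `Gamma`. -/
def potential {N : ℕ} (V : Euc N → ℝ) (c : ℝ) (q : ℝ → Euc N) (I : Set ℝ) : ℝ≥0∞ :=
  ∫⁻ t in I, ENNReal.ofReal (V (q t) - c)

section Action

variable {N : ℕ} {V : Euc N → ℝ} {c : ℝ} {q q' : ℝ → Euc N}

theorem lagJ_eq_kinetic_add_potential (hV : Continuous V) (hq : IsH1loc q q')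
    (hc : ∀ t, c ≤ V (q t)) (I : Set ℝ) :
    lagJ V c q q' I = kinetic q' I + potential V c q I := by
  have hVq : Continuous fun t => V (q t) := hV.comp hq.continuous
  rw [lagJ, kinetic, potential, ← lintegral_add_right _ (hVq.measurable.sub_const c).ennreal_ofReal]
  exact lintegral_congr fun t => ENNReal.ofReal_add (by positivity) (sub_nonneg.2 (hc t))

theorem lagJ_Iic_add_lagJ_Ioi (V : Euc N → ℝ) (c : ℝ) (q q' : ℝ → Euc N) (τ : ℝ) :
    lagJ V c q q' (Iic τ) + lagJ V c q q' (Ioi τ) = lagJ V c q q' univ := by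
  rw [lagJ, lagJ, lagJ, setLIntegral_univ, ← compl_Iic, lintegral_add_compl _ measurableSet_Iic]

theorem mc_le_lagJ {Vm Vp : Set (Euc N)} (hq : (q, q') ∈ Gamma V c Vm Vp) :
    mc V c Vm Vp ≤ lagJ V c q q' univ :=
  iInf₂_le (q, q') hq

end Action

section SmoothSegment

variable {E : Type*} [NormedAddCommGroup E] [NormedSpace ℝ E]

/-- The segment from `x` to `y`, travelled smoothly during the time interval `[0, 1]`. -/
def smoothSegment (x y : E) (t : ℝ) : E :=
  AffineMap.lineMap x y (Real.smoothTransition t)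

theorem smoothSegment_of_nonpos (x y : E) {t : ℝ} (ht : t ≤ 0) : smoothSegment x y t = x := by
  rw [smoothSegment, Real.smoothTransition.zero_of_nonpos ht, AffineMap.lineMap_apply_zero]

theorem smoothSegment_of_one_le (x y : E) {t : ℝ} (ht : 1 ≤ t) : smoothSegment x y t = y := by
  rw [smoothSegment, Real.smoothTransition.one_of_one_le ht, AffineMap.lineMap_apply_one]

theorem smoothSegment_mem_segment (x y : E) (t : ℝ) :
    smoothSegment x y t ∈ segment ℝ x y := by
  rw [segment_eq_image_lineMap]
  exact mem_image_of_mem _ ⟨Real.smoothTransition.nonneg t, Real.smoothTransition.le_one t⟩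

theorem contDiff_smoothSegment (x y : E) : ContDiff ℝ 1 (smoothSegment x y) := by
  unfold smoothSegment
  simp only [AffineMap.lineMap_apply_module']
  exact ((Real.smoothTransition.contDiff (n := 1)).smul contDiff_const).add contDiff_const

theorem deriv_smoothSegment_of_notMem_Icc (x y : E) {t : ℝ} (ht : t ∉ Icc (0 : ℝ) 1) :
    deriv (smoothSegment x y) t = 0 := by
  have hconst : smoothSegment x y =ᶠ[𝓝 t] fun _ => smoothSegment x y t := by
    rcases lt_or_ge t 0 with h0 | h0
    · filter_upwards [gt_mem_nhds h0] with s hs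
      rw [smoothSegment_of_nonpos x y hs.le, smoothSegment_of_nonpos x y h0.le]
    · have h1 : 1 < t := not_le.1 fun h1 => ht ⟨h0, h1⟩
      filter_upwards [lt_mem_nhds h1] with s hs
      rw [smoothSegment_of_one_le x y hs.le, smoothSegment_of_one_le x y h1.le]
  rw [hconst.deriv_eq, deriv_const]

end SmoothSegment

section FiniteInfimum

variable {N : ℕ} {V : Euc N → ℝ} {c : ℝ}

theorem smoothSegment_mem_Gamma {Vm Vp : Set (Euc N)} {x y : Euc N} (hx : x ∈ Vm) (hy : y ∈ Vp)
    (hc : ∀ z ∈ segment ℝ x y, c ≤ V z) :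
    (smoothSegment x y, deriv (smoothSegment x y)) ∈ Gamma V c Vm Vp := by
  refine ⟨isH1loc_of_contDiff (contDiff_smoothSegment x y),
    fun t => hc _ (smoothSegment_mem_segment x y t), fun ε hε => Eventually.frequently ?_,
    fun ε hε => Eventually.frequently ?_⟩
  · filter_upwards [eventually_le_atBot 0] with t ht
    rwa [smoothSegment_of_nonpos x y ht, infDist_zero_of_mem hx]
  · filter_upwards [eventually_ge_atTop 1] with t ht
    rwa [smoothSegment_of_one_le x y ht, infDist_zero_of_mem hy]

theorem lagJ_smoothSegment_lt_top (hV : Continuous V) {x y : Euc N} (hx : V x = c)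
    (hy : V y = c) : lagJ V c (smoothSegment x y) (deriv (smoothSegment x y)) univ < ∞ := by
  have hsmooth := contDiff_smoothSegment x y
  have hcont : Continuous fun t =>
      2⁻¹ * ‖deriv (smoothSegment x y) t‖ ^ 2 + (V (smoothSegment x y t) - c) :=
    ((hsmooth.continuous_deriv_one.norm.pow 2).const_mul _).add
      ((hV.comp hsmooth.continuous).sub continuous_const)
  have hsupp : HasCompactSupport fun t =>
      2⁻¹ * ‖deriv (smoothSegment x y) t‖ ^ 2 + (V (smoothSegment x y t) - c) := by
    refine HasCompactSupport.intro (isCompact_Icc (a := 0) (b := 1)) fun t ht => ?_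
    have hVt : V (smoothSegment x y t) = c := by
      rcases le_or_gt t 0 with h0 | h0
      · rw [smoothSegment_of_nonpos x y h0, hx]
      · rw [smoothSegment_of_one_le x y (not_le.1 fun h1 => ht ⟨h0.le, h1⟩).le, hy]
    simp [deriv_smoothSegment_of_notMem_Icc x y ht, hVt]
  rw [lagJ, setLIntegral_univ]
  exact (hcont.integrable_of_hasCompactSupport hsupp).lintegral_lt_top

theorem mc_lt_top (hV : Continuous V) {Vm Vp : Set (Euc N)} (hVm : IsClosed Vm)
    (hVp : IsClosed Vp) (hVmne : Vm.Nonempty) (hVpne : Vp.Nonempty) (hdisj : Disjoint Vm Vp)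
    (hsplit : {x | V x ≤ c} = Vm ∪ Vp) : mc V c Vm Vp < ∞ := by
  obtain ⟨x, hx, y, hy, hxy⟩ := exists_disjoint_openSegment hVm hVp hVmne hVpne hdisj
  rw [← hsplit] at hxy
  have hc (z : Euc N) (hz : z ∈ segment ℝ x y) : c ≤ V z :=
    le_of_mem_segment_of_disjoint_sublevel hV hxy hz
  have hxc : V x ≤ c := hsplit.ge (Or.inl hx)
  have hyc : V y ≤ c := hsplit.ge (Or.inr hy)
  exact (mc_le_lagJ (smoothSegment_mem_Gamma hx hy hc)).trans_lt
    (lagJ_smoothSegment_lt_top hV (hxc.antisymm (hc x (left_mem_segment ℝ x y)))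
      (hyc.antisymm (hc y (right_mem_segment ℝ x y))))

end FiniteInfimum

section Dilation

variable {N : ℕ} {V : Euc N → ℝ} {c : ℝ} {Vm Vp : Set (Euc N)} {q q' : ℝ → Euc N} {l : ℝ}

/-- The curve `q` with its past up to time `τ` run at speed `l`. -/
def dilatePast (τ l : ℝ) (q : ℝ → Euc N) : ℝ → Euc N :=
  (Iic τ).piecewise (fun t => q (l * t + (1 - l) * τ)) q

/-- The derivative of `dilatePast τ l q`, in terms of the derivative `q'` of `q`. -/
def dilatePastDeriv (τ l : ℝ) (q' : ℝ → Euc N) : ℝ → Euc N :=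
  (Iic τ).piecewise (fun t => l • q' (l * t + (1 - l) * τ)) q'

theorem dilatePast_of_le (q : ℝ → Euc N) {τ t : ℝ} (ht : t ≤ τ) :
    dilatePast τ l q t = q (l * t + (1 - l) * τ) :=
  piecewise_eq_of_mem _ _ _ (mem_Iic.2 ht)

theorem dilatePast_of_lt (q : ℝ → Euc N) {τ t : ℝ} (ht : τ < t) : dilatePast τ l q t = q t :=
  piecewise_eq_of_notMem _ _ _ (notMem_Iic.2 ht)

theorem dilatePastDeriv_of_le (q' : ℝ → Euc N) {τ t : ℝ} (ht : t ≤ τ) :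
    dilatePastDeriv τ l q' t = l • q' (l * t + (1 - l) * τ) :=
  piecewise_eq_of_mem _ _ _ (mem_Iic.2 ht)

theorem dilatePastDeriv_of_lt (q' : ℝ → Euc N) {τ t : ℝ} (ht : τ < t) :
    dilatePastDeriv τ l q' t = q' t :=
  piecewise_eq_of_notMem _ _ _ (notMem_Iic.2 ht)

theorem isH1loc_dilatePast (hq : IsH1loc q q') (τ : ℝ) (hl : l ≠ 0) :
    IsH1loc (dilatePast τ l q) (dilatePastDeriv τ l q') :=
  (hq.comp_mul_add hl _).piecewise hq (congrArg q (by ring))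

theorem dilatePast_mem_Gamma (hq : (q, q') ∈ Gamma V c Vm Vp) (τ : ℝ) (hl : 0 < l) :
    (dilatePast τ l q, dilatePastDeriv τ l q') ∈ Gamma V c Vm Vp := by
  obtain ⟨hH1, hc, hbot, htop⟩ := hq
  refine ⟨isH1loc_dilatePast hH1 τ hl.ne', fun t => ?_, fun ε hε => ?_, fun ε hε => ?_⟩
  · rcases le_or_gt t τ with ht | ht
    · simpa only [dilatePast_of_le q ht] using hc _
    · simpa only [dilatePast_of_lt q ht] using hc t
  · have hlim : Tendsto (fun t => l⁻¹ * (t - (1 - l) * τ)) atBot atBot :=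
      (tendsto_atBot_add_const_right _ _ tendsto_id).const_mul_atBot (inv_pos.2 hl)
    have hbot' : ∃ᶠ t in atBot, infDist (q (l * t + (1 - l) * τ)) Vm < ε := by
      refine hlim.frequently ((hbot ε hε).mono fun t ht => ?_)
      rwa [mul_inv_cancel_left₀ hl.ne', sub_add_cancel]
    refine (hbot'.and_eventually (eventually_le_atBot τ)).mono fun t ⟨ht, htτ⟩ => ?_
    simpa only [dilatePast_of_le q htτ] using ht
  · refine ((htop ε hε).and_eventually (eventually_gt_atTop τ)).mono fun t ⟨ht, hτt⟩ => ?_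
    simpa only [dilatePast_of_lt q hτt] using ht

theorem kinetic_dilatePast (q' : ℝ → Euc N) (τ : ℝ) (hl : 0 < l) :
    kinetic (dilatePastDeriv τ l q') (Iic τ) = ENNReal.ofReal l * kinetic q' (Iic τ) := by
  calc kinetic (dilatePastDeriv τ l q') (Iic τ)
    _ = ∫⁻ t in Iic τ, ENNReal.ofReal (l ^ 2) *
          ENNReal.ofReal (2⁻¹ * ‖q' (l * t + (1 - l) * τ)‖ ^ 2) := by
        refine setLIntegral_congr_fun measurableSet_Iic fun t ht => ?_
        simp only [dilatePastDeriv_of_le q' ht]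
        rw [← ENNReal.ofReal_mul (sq_nonneg l), norm_smul, mul_pow, Real.norm_eq_abs, sq_abs,
          mul_left_comm]
    _ = ENNReal.ofReal (l ^ 2) * (ENNReal.ofReal l⁻¹ * kinetic q' (Iic τ)) := by
        rw [lintegral_const_mul' _ _ ENNReal.ofReal_ne_top, kinetic,
          lintegral_Iic_comp_dilation hl τ fun t => ENNReal.ofReal (2⁻¹ * ‖q' t‖ ^ 2)]
    _ = ENNReal.ofReal l * kinetic q' (Iic τ) := by
        rw [← mul_assoc, ← ENNReal.ofReal_mul (sq_nonneg l)]
        congr 2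
        field_simp

theorem potential_dilatePast (V : Euc N → ℝ) (c : ℝ) (q : ℝ → Euc N) (τ : ℝ) (hl : 0 < l) :
    potential V c (dilatePast τ l q) (Iic τ) = ENNReal.ofReal l⁻¹ * potential V c q (Iic τ) := by
  rw [potential, potential,
    ← lintegral_Iic_comp_dilation hl τ fun t => ENNReal.ofReal (V (q t) - c)]
  exact setLIntegral_congr_fun measurableSet_Iic fun t ht => by
    simp only [dilatePast_of_le q ht]

theorem lagJ_dilatePast_Ioi (V : Euc N → ℝ) (c : ℝ) (q q' : ℝ → Euc N) (τ l : ℝ) :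
    lagJ V c (dilatePast τ l q) (dilatePastDeriv τ l q') (Ioi τ) = lagJ V c q q' (Ioi τ) :=
  setLIntegral_congr_fun measurableSet_Ioi fun t ht => by
    simp only [dilatePast_of_lt q ht, dilatePastDeriv_of_lt q' ht]

theorem kinetic_add_potential_le_of_minimal (hV : Continuous V) (hq : (q, q') ∈ Gamma V c Vm Vp)
    (hmin : lagJ V c q q' univ = mc V c Vm Vp) (hfin : lagJ V c q q' univ ≠ ∞) (τ : ℝ)
    (hl : 0 < l) :
    kinetic q' (Iic τ) + potential V c q (Iic τ) ≤
      ENNReal.ofReal l * kinetic q' (Iic τ) + ENNReal.ofReal l⁻¹ * potential V c q (Iic τ) := by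
  have hp := dilatePast_mem_Gamma hq τ hl
  have hle : lagJ V c q q' (Iic τ) + lagJ V c q q' (Ioi τ) ≤
      lagJ V c (dilatePast τ l q) (dilatePastDeriv τ l q') (Iic τ) + lagJ V c q q' (Ioi τ) := by
    rw [lagJ_Iic_add_lagJ_Ioi, ← lagJ_dilatePast_Ioi V c q q' τ l, lagJ_Iic_add_lagJ_Ioi, hmin]
    exact mc_le_lagJ hp
  have hIoi : lagJ V c q q' (Ioi τ) ≠ ∞ :=
    ne_top_of_le_ne_top hfin (lintegral_mono_set (subset_univ _))
  have hle' := ENNReal.le_of_add_le_add_right hIoi hle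
  rwa [lagJ_eq_kinetic_add_potential hV hq.1 hq.2.1, lagJ_eq_kinetic_add_potential hV hp.1 hp.2.1,
    kinetic_dilatePast q' τ hl, potential_dilatePast V c q τ hl] at hle'

theorem kinetic_Iic_eq_potential_Iic (hV : Continuous V) (hq : (q, q') ∈ Gamma V c Vm Vp)
    (hmin : lagJ V c q q' univ = mc V c Vm Vp) (hfin : lagJ V c q q' univ ≠ ∞) (τ : ℝ) :
    kinetic q' (Iic τ) = potential V c q (Iic τ) := by
  obtain ⟨hK, hP⟩ : kinetic q' (Iic τ) ≠ ∞ ∧ potential V c q (Iic τ) ≠ ∞ := by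
    rw [← ENNReal.add_ne_top, ← lagJ_eq_kinetic_add_potential hV hq.1 hq.2.1]
    exact ne_top_of_le_ne_top hfin (lintegral_mono_set (subset_univ _))
  rw [← ENNReal.toReal_eq_toReal_iff' hK hP]
  refine eq_of_forall_add_le_mul_add_inv_mul fun l hl => ?_
  have h := kinetic_add_potential_le_of_minimal hV hq hmin hfin τ hl
  lift kinetic q' (Iic τ) to NNReal using hK with K
  lift potential V c q (Iic τ) to NNReal using hP with P
  have h' := ENNReal.toReal_mono (by finiteness) h
  rwa [ENNReal.toReal_add (by finiteness) (by finiteness),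
    ENNReal.toReal_add (by finiteness) (by finiteness), ENNReal.toReal_mul, ENNReal.toReal_mul,
    ENNReal.toReal_ofReal hl.le, ENNReal.toReal_ofReal (inv_pos.2 hl).le] at h'

end Dilation

theorem minimizer_equipartition_general {N : ℕ} {V : Euc N → ℝ} (hV : Continuous V) {c : ℝ}
    {Vm Vp : Set (Euc N)} (hVm : IsClosed Vm) (hVp : IsClosed Vp)
    (hVmne : Vm.Nonempty) (hVpne : Vp.Nonempty) (hdisj : Disjoint Vm Vp)
    (hsplit : {x | V x ≤ c} = Vm ∪ Vp) {q q' : ℝ → Euc N} (hq : (q, q') ∈ Gamma V c Vm Vp)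
    (hmin : lagJ V c q q' univ = mc V c Vm Vp) :
    ∀ᵐ t, 2⁻¹ * ‖deriv q t‖ ^ 2 = V (q t) - c := by
  have hfin : lagJ V c q q' univ ≠ ∞ := by
    rw [hmin]
    exact (mc_lt_top hV hVm hVp hVmne hVpne hdisj hsplit).ne
  have hH1 : IsH1loc q q' := hq.1
  have hc : ∀ t, c ≤ V (q t) := hq.2.1
  have hK : kinetic q' univ ≠ ∞ := by
    refine ne_top_of_le_ne_top hfin ?_
    rw [lagJ_eq_kinetic_add_potential hV hH1 hc]
    exact le_self_add
  rw [kinetic, setLIntegral_univ] at hK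
  have hae := ae_eq_of_setLIntegral_Iic_eq
    ((hH1.1.aestronglyMeasurable.norm.aemeasurable.pow_const 2).const_mul 2⁻¹).ennreal_ofReal
    ((hV.comp hH1.continuous).measurable.sub_const c).ennreal_ofReal.aemeasurable
    hK (kinetic_Iic_eq_potential_Iic hV hq hmin hfin)
  filter_upwards [hae, hH1.ae_deriv_eq] with t ht hderiv
  rwa [hderiv, ← ENNReal.ofReal_eq_ofReal_iff (by positivity) (sub_nonneg.2 (hc t))]

/-- Lemma 2.8 (equipartition of the action): on any subinterval of `(α_q, ω_q)` the kinetic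
and potential parts of the action of a minimizer coincide. -/
theorem minimizer_equipartition {N : ℕ} (hN : 0 < N) (V : Euc N → ℝ) (hV : ContDiff ℝ 1 V)
    (c : ℝ) (Vm Vp : Set (Euc N)) (hVm : IsClosed Vm) (hVp : IsClosed Vp)
    (hsplit : {x | V x ≤ c} = Vm ∪ Vp) (hsep : 0 < setDist Vm Vp)
    (R : ℝ) (hR : 0 < R) (hcoer : Coercive V c Vm Vp R)
    (q q' : ℝ → Euc N) (hq : MemM V c Vm Vp R q q')
    (τ σ : ℝ) (hτσ : τ ≤ σ)
    (hτ : alphaQ Vm q ≤ (τ : EReal)) (hσ : (σ : EReal) ≤ omegaQ Vm Vp q) :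
    2⁻¹ * ∫ t in τ..σ, ‖deriv q t‖ ^ 2 = ∫ t in τ..σ, (V (q t) - c) := by
  obtain ⟨hVmne, hVpne⟩ := nonempty_of_setDist_pos hsep
  have henergy := minimizer_equipartition_general hV.continuous hVm hVp hVmne hVpne
    (disjoint_of_setDist_pos hsep) hsplit hq.1 hq.2.2.1
  rw [← intervalIntegral.integral_const_mul]
  exact intervalIntegral.integral_congr_ae (henergy.mono fun _ ht _ => ht)
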